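/- Let q = 2p with p ≥ 2, λ = 2cos(π/q), and 1/2 < α < 1/λ. Define H_{2n} = sin(nπ/(2p))/sin((n+1)π/(2p)) for n = 1, …, p−1, H_{2n−1} = (cos(nπ/(2p)) − cos((n−1)π/(2p)))/(cos((n+1)π/(2p)) − cos(nπ/(2p))) for n = 1, …, p, and let Ω_α = ⋃_{n=1}^{2p−1} J_n × [0, H_n] with J_{2n−1} = [ℓ_{n−1}, r_n), J_{2n} = [r_n, ℓ_n) for n = 1, …, p−1, and J_{2p−1} = [ℓ_{p−1}, r_0). Then the map 𝒯_α(x,y) = (T_α(x), 1/(d(x)λ + ε(x)y)) maps Ω_α to Ω_α and is bijective off of a set of two-dimensional Lebesgue measure zero; that is, there exist Lebesgue-null sets N, N′ ⊆ Ω_α such that 𝒯_α restricts to a bijection from Ω_α \ N onto Ω_α \ N′. -/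

import Mathlib

open Set MeasureTheory

/-- The digit function `d(x) = ⌊|1/(xλ)| + 1 - α⌋` of the α-Rosen continued fraction. -/
noncomputable def dfun (lam α x : ℝ) : ℤ := ⌊|1 / (x * lam)| + 1 - α⌋

/-- The α-Rosen continued fraction map `T_α`. -/
noncomputable def Tmap (lam α x : ℝ) : ℝ :=
  if x = 0 then 0 else |1 / x| - lam * (dfun lam α x : ℝ)

/-- The two-dimensional natural extension map `𝒯_α(x, y) = (T_α(x), 1/(d(x)λ + ε(x)y))`. -/
noncomputable def Tnat (lam α : ℝ) (z : ℝ × ℝ) : ℝ × ℝ :=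
  (Tmap lam α z.1, 1 / ((dfun lam α z.1 : ℝ) * lam + Real.sign z.1 * z.2))

/-!
The second coordinate of `𝒯_α (x, y)` has reciprocal `d(x) λ + ε(x) y`. On the vertical line above
a point `x`, in the coordinate `1 / y`, the image of the region `0 < y < h` is therefore a union of
slots `kλ + s (0, h (s / (x + kλ)))`, one for each inverse branch `s / (x + kλ)` of `T_α`, where
`s = ±1`. If for all but countably many `x` these slots are disjoint and fill `[1 / h x, ∞)` up to
countably many points, then `𝒯_α` is a bijection of the region off null sets.

For a step function `h`, tiling amounts to finitely many relations between its values and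
breakpoints. With `θ = π / q`, the heights `H_n` and the shifted orbits `ℓ_n + λ`, `r_n + λ` are
values of `s ↦ sin s / sin (s + θ)`, on which `y ↦ 1 / (λ - y)` acts as `s ↦ s + θ`. The relations
thus become trigonometric identities, among them `1 / ℓ_{p-1} + 1 / r_{p-1} = -λ`, which says that
the orbits of the two endpoints meet.
-/

/-! ### Inverse branches -/

/-- The domain `[(α - 1)λ, αλ)` of `T_α`, without its right endpoint. -/
def rosenInterval (lam α : ℝ) : Set ℝ := Ico ((α - 1) * lam) (α * lam)

/-- The admissible parameters `(λ, α)`: besides `1/2 < α < 1/λ`, the only property of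
`λ = 2 cos (π/q)` retained here is the bound `√2 ≤ λ` for even `q ≥ 4`. -/
structure IsRosenPair (lam α : ℝ) : Prop where
  sqrt_two_le : √2 ≤ lam
  half_lt : 1 / 2 < α
  mul_lt_one : α * lam < 1

theorem IsRosenPair.one_lt {lam α : ℝ} (hp : IsRosenPair lam α) : 1 < lam :=
  Real.one_lt_sqrt_two.trans_le hp.sqrt_two_le

theorem IsRosenPair.pos {lam α : ℝ} (hp : IsRosenPair lam α) : 0 < lam :=
  one_pos.trans hp.one_lt

theorem IsRosenPair.mul_pos {lam α : ℝ} (hp : IsRosenPair lam α) : 0 < α * lam :=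
  _root_.mul_pos (by linarith [hp.half_lt]) hp.pos

theorem IsRosenPair.mul_le_add {lam α x : ℝ} (hp : IsRosenPair lam α)
    (hx : x ∈ rosenInterval lam α) {k : ℤ} (hk : 1 ≤ k) : α * lam ≤ x + k * lam := by
  have hk' : (1 : ℝ) ≤ k := mod_cast hk
  nlinarith [hx.1, hp.pos]

theorem IsRosenPair.add_pos {lam α x : ℝ} (hp : IsRosenPair lam α)
    (hx : x ∈ rosenInterval lam α) {k : ℤ} (hk : 1 ≤ k) : 0 < x + k * lam :=
  hp.mul_pos.trans_le (hp.mul_le_add hx hk)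

theorem IsRosenPair.abs_lt_one {lam α x : ℝ} (hp : IsRosenPair lam α)
    (hx : x ∈ rosenInterval lam α) : |x| < 1 :=
  abs_lt.2 ⟨by nlinarith [hx.1, hp.half_lt, hp.mul_lt_one, hp.pos], hx.2.trans hp.mul_lt_one⟩

theorem dfun_eq_iff {lam α x : ℝ} (hlam : 0 < lam) {k : ℤ} :
    dfun lam α x = k ↔ |1 / x| - lam * k ∈ rosenInterval lam α := by
  have hx : |1 / x| = |1 / (x * lam)| * lam := by
    rw [← div_div, abs_div _ lam, abs_of_pos hlam, div_mul_cancel₀ _ hlam.ne']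
  rw [dfun, Int.floor_eq_iff, hx, mul_comm lam, ← sub_mul, rosenInterval, mem_Ico,
    mul_le_mul_iff_left₀ hlam, mul_lt_mul_iff_left₀ hlam]
  constructor <;> rintro ⟨hlow, hhigh⟩ <;> constructor <;> linarith

theorem Tmap_eq {lam α x : ℝ} (hx : x ≠ 0) : Tmap lam α x = |1 / x| - lam * dfun lam α x :=
  if_neg hx

theorem Tmap_eq_of_mem {lam α x : ℝ} (hlam : 0 < lam) (hx : x ≠ 0) {k : ℤ}
    (hk : |1 / x| - lam * k ∈ rosenInterval lam α) : Tmap lam α x = |1 / x| - lam * k := by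
  rw [Tmap_eq hx, (dfun_eq_iff hlam).2 hk]

theorem Tmap_mem_rosenInterval {lam α x : ℝ} (hlam : 0 < lam) (hx : x ≠ 0) :
    Tmap lam α x ∈ rosenInterval lam α := by
  rw [Tmap_eq hx]
  exact (dfun_eq_iff hlam).1 rfl

theorem one_le_dfun {lam α x : ℝ} (hp : IsRosenPair lam α) (hx : x ∈ rosenInterval lam α)
    (hx0 : x ≠ 0) : 1 ≤ dfun lam α x := by
  have hT := (Tmap_mem_rosenInterval (α := α) hp.pos hx0).2
  rw [Tmap_eq hx0] at hT
  have hinv : 1 < |1 / x| := by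
    rw [abs_one_div]
    exact one_lt_one_div (abs_pos.2 hx0) (hp.abs_lt_one hx)
  have hd : 0 < lam * (dfun lam α x : ℝ) := by linarith [hp.mul_lt_one]
  exact mod_cast pos_of_mul_pos_right hd hp.pos.le

theorem exists_eq_div_Tmap_add {lam α x : ℝ} (hp : IsRosenPair lam α)
    (hx : x ∈ rosenInterval lam α) (hx0 : x ≠ 0) :
    ∃ s : ℝ, ∃ k : ℤ, |s| = 1 ∧ 1 ≤ k ∧ x = s / (Tmap lam α x + k * lam) := by
  refine ⟨SignType.sign x, dfun lam α x, ?_, one_le_dfun hp hx hx0, ?_⟩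
  · rcases hx0.lt_or_gt with h | h <;> simp [h]
  · rw [Tmap_eq hx0, mul_comm, sub_add_cancel, abs_one_div, div_div_eq_mul_div, div_one,
      sign_mul_abs]

theorem Tnat_div_add {lam α x s t : ℝ} {k : ℤ} (hlam : 0 < lam) (hx : x ∈ rosenInterval lam α)
    (hk : 0 < x + k * lam) (hs : |s| = 1) :
    Tnat lam α (s / (x + k * lam), t) = (x, 1 / (k * lam + s * t)) := by
  have habs : |1 / (s / (x + k * lam))| - lam * k = x := by
    rw [one_div_div, abs_div, hs, abs_of_pos hk]
    ring
  have hmem : |1 / (s / (x + k * lam))| - lam * k ∈ rosenInterval lam α := habs.symm ▸ hx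
  have hs0 : s / (x + k * lam) ≠ 0 := div_ne_zero (by rintro rfl; simp at hs) hk.ne'
  have hsign : Real.sign (s / (x + k * lam)) = s := by
    rcases eq_or_eq_neg_of_abs_eq hs with rfl | rfl
    · exact Real.sign_of_pos (div_pos one_pos hk)
    · exact Real.sign_of_neg (div_neg_of_neg_of_pos (by norm_num) hk)
  simp only [Tnat, Tmap_eq_of_mem hlam hs0 hmem, (dfun_eq_iff hlam).2 hmem, habs, hsign]

/-! ### Tilings of the reciprocal heights -/

/-- The closed region `{(x, y) | x ∈ s, 0 ≤ y ≤ h x}`; the planar domains `Ω_α` have this form. -/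
def closedHypograph (s : Set ℝ) (h : ℝ → ℝ) : Set (ℝ × ℝ) :=
  {z | z.1 ∈ s ∧ z.2 ∈ Icc 0 (h z.1)}

/-- With `x_k^s = s / (x + kλ)`, `s = ±1`, the inverse branches of `T_α`, this says that
`(x_k^s, t)` lies strictly between the axis and the graph of `h`. As `𝒯_α` sends this point to
`(x, 1 / (kλ + s t))`, it fills the slot `kλ + s (0, h (x_k^s))` of the line of reciprocal
heights above `x`. -/
structure InSlot (lam : ℝ) (h : ℝ → ℝ) (x s : ℝ) (k : ℤ) (t : ℝ) : Prop where
  abs_sign : |s| = 1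
  one_le : 1 ≤ k
  pos : 0 < t
  lt : t < h (s / (x + k * lam))

/-- The slots above `x` tile the half-line `[1 / h x, ∞)` of reciprocal heights, starting with
the negative slot at the digit `m`. -/
structure TilesAt (lam : ℝ) (h : ℝ → ℝ) (x : ℝ) (m : ℤ) : Prop where
  eq_zero : ∀ k, 1 ≤ k → k < m → ∀ s, |s| = 1 → h (s / (x + k * lam)) = 0
  inv_eq : (h x)⁻¹ = m * lam - h (-1 / (x + m * lam))
  add_eq : ∀ k, m ≤ k → h (1 / (x + k * lam)) + h (-1 / (x + (k + 1) * lam)) = lam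
  one_le : 1 ≤ m

theorem eq_of_mul_add_eq_mul_add {lam a b : ℝ} {k l : ℤ} (hab : |a - b| < lam)
    (h : k * lam + a = l * lam + b) : k = l := by
  have hlam : 0 < lam := (abs_nonneg _).trans_lt hab
  have habs : |((l - k : ℤ) : ℝ)| * lam = |a - b| := by
    calc |((l - k : ℤ) : ℝ)| * lam = |((l - k : ℤ) : ℝ) * lam| := by
          rw [abs_mul, abs_of_pos hlam]
      _ = |a - b| := by
          congr 1
          push_cast
          linarith
  have hlt : |((l - k : ℤ) : ℝ)| < 1 := lt_of_mul_lt_mul_right (by linarith) hlam.le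
  have := Int.abs_lt_one_iff.1 (mod_cast hlt)
  omega

section Tiling

variable {lam x : ℝ} {h : ℝ → ℝ} {m : ℤ}

theorem TilesAt.le_of_inSlot (hT : TilesAt lam h x m) {s t : ℝ} {k : ℤ}
    (hk : InSlot lam h x s k t) : m ≤ k := by
  by_contra! hkm
  linarith [hT.eq_zero k hk.one_le hkm s hk.abs_sign, hk.pos, hk.lt]

theorem TilesAt.inv_le_of_inSlot (hT : TilesAt lam h x m) (h_nonneg : ∀ x, 0 ≤ h x)
    (h_lt : ∀ x, h x < lam) {s t : ℝ} {k : ℤ} (hk : InSlot lam h x s k t) :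
    (h x)⁻¹ ≤ k * lam + s * t := by
  have hlam : 0 < lam := (h_nonneg 0).trans_lt (h_lt 0)
  have hnn := h_nonneg (-1 / (x + m * lam))
  rw [hT.inv_eq]
  rcases (hT.le_of_inSlot hk).eq_or_lt with rfl | hmk
  · rcases eq_or_eq_neg_of_abs_eq hk.abs_sign with rfl | rfl
    · linarith [hk.pos]
    · linarith [hk.lt]
  · have hmk' : (m : ℝ) + 1 ≤ k := mod_cast hmk
    have hst : |s * t| < lam := by
      rw [abs_mul, hk.abs_sign, one_mul, abs_of_pos hk.pos]
      exact hk.lt.trans (h_lt _)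
    nlinarith [(abs_lt.1 hst).1]

theorem TilesAt.add_ne_sub (hT : TilesAt lam h x m) (h_lt : ∀ x, h x < lam) {t t' : ℝ} {k k' : ℤ}
    (hk : InSlot lam h x 1 k t) (hk' : InSlot lam h x (-1) k' t') :
    k * lam + t ≠ k' * lam - t' := by
  intro heq
  have ht := hk.lt.trans (h_lt _)
  have ht' := hk'.lt.trans (h_lt _)
  obtain rfl : k + 1 = k' := by
    refine eq_of_mul_add_eq_mul_add (lam := lam) (a := t - lam) (b := -t') ?_ ?_
    · exact abs_lt.2 ⟨by linarith [hk.pos, hk'.pos], by linarith⟩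
    · push_cast
      linarith
  have hadd := hT.add_eq k (hT.le_of_inSlot hk)
  have hlt' := hk'.lt
  push_cast at heq hlt'
  linarith [hk.lt]

theorem TilesAt.inSlot_unique (hT : TilesAt lam h x m) (h_lt : ∀ x, h x < lam) {s s' t t' : ℝ}
    {k k' : ℤ} (hk : InSlot lam h x s k t) (hk' : InSlot lam h x s' k' t')
    (heq : k * lam + s * t = k' * lam + s' * t') : s = s' ∧ k = k' ∧ t = t' := by
  obtain rfl : s = s' := by
    rcases eq_or_eq_neg_of_abs_eq hk.abs_sign with rfl | rfl <;>
      rcases eq_or_eq_neg_of_abs_eq hk'.abs_sign with rfl | rfl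
    · rfl
    · exact absurd (by linarith) (hT.add_ne_sub h_lt hk hk')
    · exact absurd (by linarith) (hT.add_ne_sub h_lt hk' hk)
    · rfl
  have hdist : |s * t - s * t'| < lam := by
    rw [← mul_sub, abs_mul, hk.abs_sign, one_mul]
    exact abs_lt.2 ⟨by linarith [hk.pos, hk'.lt, h_lt (s / (x + k' * lam))],
      by linarith [hk'.pos, hk.lt, h_lt (s / (x + k * lam))]⟩
  obtain rfl := eq_of_mul_add_eq_mul_add hdist heq
  have hs : s ≠ 0 := abs_pos.1 (hk.abs_sign ▸ one_pos)
  exact ⟨rfl, rfl, mul_left_cancel₀ hs (add_left_cancel heq)⟩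

theorem TilesAt.exists_inSlot (hT : TilesAt lam h x m) (h_nonneg : ∀ x, 0 ≤ h x)
    (h_lt : ∀ x, h x < lam) {u : ℝ} (hu : (h x)⁻¹ < u) (hu0 : ∀ k : ℤ, u ≠ k * lam)
    (hu1 : ∀ (k : ℤ) (y : ℝ), u ≠ k * lam + h y) :
    ∃ s k t, InSlot lam h x s k t ∧ u = k * lam + s * t := by
  have hlam : 0 < lam := (h_nonneg 0).trans_lt (h_lt 0)
  obtain ⟨j, hju, huj⟩ : ∃ j : ℤ, j * lam < u ∧ u < (j + 1) * lam :=
    ⟨⌊u / lam⌋, ((le_div_iff₀ hlam).1 (Int.floor_le _)).lt_of_ne' (hu0 _),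
      (div_lt_iff₀ hlam).1 (Int.lt_floor_add_one _)⟩
  rw [hT.inv_eq] at hu
  rcases le_or_gt m j with hmj | hjm
  · have hadd := hT.add_eq j hmj
    rcases (hu1 j (1 / (x + j * lam))).lt_or_gt with hlt | hgt
    · exact ⟨1, j, u - j * lam, ⟨abs_one, hT.one_le.trans hmj, by linarith, by linarith⟩, by ring⟩
    · refine ⟨-1, j + 1, (j + 1) * lam - u, ⟨by simp, by linarith [hT.one_le], by linarith, ?_⟩, ?_⟩
      · push_cast
        linarith
      · push_cast
        ring
  · have hm : (m : ℝ) = j + 1 := by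
      have hmj : ((m - 1 : ℤ) : ℝ) < (j + 1 : ℤ) := by
        refine lt_of_mul_lt_mul_right ?_ hlam.le
        push_cast
        linarith [h_lt (-1 / (x + m * lam))]
      have hmj' : m - 1 < j + 1 := mod_cast hmj
      exact mod_cast (show m = j + 1 by omega)
    rw [← hm] at huj
    exact ⟨-1, m, m * lam - u, ⟨by simp, hT.one_le, by linarith, by linarith⟩, by ring⟩

end Tiling

theorem exists_null_bijOn {X Y : Type*} [MeasurableSpace X] [MeasurableSpace Y] {μ : Measure X}
    {ν : Measure Y} {f : X → Y} {A D : Set X} {B : Set Y} (hDA : D ⊆ A) (hAD : μ (A \ D) = 0)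
    (hinj : InjOn f D) (hDB : MapsTo f D B) (hBD : ν (B \ f '' D) = 0) :
    ∃ N N', N ⊆ A ∧ N' ⊆ B ∧ μ N = 0 ∧ ν N' = 0 ∧ BijOn f (A \ N) (B \ N') := by
  refine ⟨A \ D, B \ f '' D, sdiff_subset, sdiff_subset, hAD, hBD, ?_⟩
  rw [sdiff_sdiff_cancel_left hDA, sdiff_sdiff_cancel_left hDB.image_subset]
  exact hinj.bijOn_image

theorem volume_setOf_fst_mem_or_snd_mem {C C' : Set ℝ} (hC : C.Countable) (hC' : C'.Countable) :
    volume {z : ℝ × ℝ | z.1 ∈ C ∨ z.2 ∈ C'} = 0 :=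
  measure_union_null
    (Measure.quasiMeasurePreserving_fst.preimage_null (hC.measure_zero volume))
    (Measure.quasiMeasurePreserving_snd.preimage_null (hC'.measure_zero volume))

theorem countable_setOf_Tmap_mem {lam α : ℝ} (hp : IsRosenPair lam α) {E : Set ℝ}
    (hE : E.Countable) :
    {x ∈ rosenInterval lam α | x ≠ 0 ∧ Tmap lam α x ∈ E}.Countable := by
  have hsigns : ({1, -1} : Set ℝ).Countable := to_countable _
  refine ((hsigns.prod (countable_univ (α := ℤ))).image2 hE
    fun c e => c.1 / (e + c.2 * lam)).mono ?_
  rintro x ⟨hx, hx0, hTE⟩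
  obtain ⟨s, k, hs, -, hxs⟩ := exists_eq_div_Tmap_add hp hx hx0
  exact ⟨(s, k), ⟨eq_or_eq_neg_of_abs_eq hs, mem_univ k⟩, _, hTE, hxs.symm⟩

/-- A height function whose closed hypograph over `rosenInterval lam α` is, off a null set, a
domain of bijectivity for `𝒯_α`. It is extended by `0` so that inverse branches leaving the interval
have empty slots. The countable set `E` collects the exceptional abscissae. -/
structure IsHeightFunction (lam α : ℝ) (E : Set ℝ) (h : ℝ → ℝ) : Prop where
  countable_exceptional : E.Countable
  countable_range : (range h).Countable
  pos_of_mem : ∀ x ∈ rosenInterval lam α, 0 < h x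
  eq_zero_of_notMem : ∀ x ∉ rosenInterval lam α, h x = 0
  lt : ∀ x, h x < lam
  exists_tilesAt : ∀ x ∈ rosenInterval lam α \ E, ∃ m, TilesAt lam h x m

theorem IsHeightFunction.nonneg {lam α : ℝ} {E : Set ℝ} {h : ℝ → ℝ}
    (hh : IsHeightFunction lam α E h) (x : ℝ) : 0 ≤ h x := by
  by_cases hx : x ∈ rosenInterval lam α
  · exact (hh.pos_of_mem x hx).le
  · exact (hh.eq_zero_of_notMem x hx).ge

section NaturalExtension

variable {lam α : ℝ} {h : ℝ → ℝ} {E : Set ℝ}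

/-- The points of the region below the graph of `h` on which `𝒯_α` is controlled by the tiling
condition: they lie in the interior of a slot above a point outside the exceptional set `E`. -/
def slotPoints (lam α : ℝ) (h : ℝ → ℝ) (E : Set ℝ) : Set (ℝ × ℝ) :=
  {z | ∃ x ∈ rosenInterval lam α \ E, ∃ (s : ℝ) (k : ℤ), z.1 = s / (x + k * lam) ∧
    InSlot lam h x s k z.2}

theorem slotPoints_subset_closedHypograph (hh : IsHeightFunction lam α E h) :
    slotPoints lam α h E ⊆ closedHypograph (rosenInterval lam α) h := by
  rintro ⟨_, t⟩ ⟨x, -, s, k, rfl, hk⟩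
  refine ⟨?_, hk.pos.le, hk.lt.le⟩
  by_contra hmem
  exact (hh.eq_zero_of_notMem _ hmem).not_gt (hk.pos.trans hk.lt)

theorem volume_closedHypograph_sdiff_slotPoints (hp : IsRosenPair lam α)
    (hh : IsHeightFunction lam α E h) :
    volume (closedHypograph (rosenInterval lam α) h \ slotPoints lam α h E) = 0 := by
  refine measure_mono_null ?_ (volume_setOf_fst_mem_or_snd_mem
    ((countable_setOf_Tmap_mem hp hh.countable_exceptional).insert 0) (hh.countable_range.insert 0))
  rintro ⟨x, y⟩ ⟨⟨hx, hy, hyh⟩, hnot⟩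
  contrapose! hnot
  obtain ⟨hxE, hyC⟩ : x ∉ _ ∧ y ∉ _ := not_or.1 hnot
  have hx0 : x ≠ 0 := fun h0 => hxE (mem_insert_iff.2 (Or.inl h0))
  have hTE : Tmap lam α x ∉ E := fun hT => hxE (mem_insert_of_mem _ ⟨hx, hx0, hT⟩)
  have hy0 : 0 < y := hy.lt_of_ne' fun h0 => hyC (mem_insert_iff.2 (Or.inl h0))
  have hyh' : y < h x := hyh.lt_of_ne fun heq => hyC (mem_insert_of_mem _ ⟨x, heq.symm⟩)
  obtain ⟨s, k, hs, hk, hxs⟩ := exists_eq_div_Tmap_add hp hx hx0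
  exact ⟨_, ⟨Tmap_mem_rosenInterval hp.pos hx0, hTE⟩, s, k, hxs, hs, hk, hy0, hxs ▸ hyh'⟩

theorem injOn_Tnat_slotPoints (hp : IsRosenPair lam α) (hh : IsHeightFunction lam α E h) :
    InjOn (Tnat lam α) (slotPoints lam α h E) := by
  rintro ⟨_, t⟩ ⟨x, hx, s, k, rfl, hk⟩ ⟨_, t'⟩ ⟨x', hx', s', k', rfl, hk'⟩ heq
  rw [Tnat_div_add hp.pos hx.1 (hp.add_pos hx.1 hk.one_le) hk.abs_sign,
    Tnat_div_add hp.pos hx'.1 (hp.add_pos hx'.1 hk'.one_le) hk'.abs_sign, Prod.mk.injEq,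
    one_div, one_div, inv_inj] at heq
  obtain ⟨rfl, hslot⟩ := heq
  obtain ⟨m, hT⟩ := hh.exists_tilesAt x hx
  obtain ⟨rfl, rfl, rfl⟩ := hT.inSlot_unique hh.lt hk hk' hslot
  rfl

theorem volume_closedHypograph_sdiff_image_slotPoints (hp : IsRosenPair lam α)
    (hh : IsHeightFunction lam α E h) :
    volume (closedHypograph (rosenInterval lam α) h \
      Tnat lam α '' slotPoints lam α h E) = 0 := by
  set V : Set ℝ := insert 0 (range h)
  have hV : V.Countable := hh.countable_range.insert 0
  refine measure_mono_null ?_ (volume_setOf_fst_mem_or_snd_mem hh.countable_exceptional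
    (hV.union ((countable_univ (α := ℤ)).image2 hV fun k v => (k * lam + v)⁻¹)))
  rintro ⟨x, y⟩ ⟨⟨hx, hy, hyh⟩, hnot⟩
  contrapose! hnot
  obtain ⟨hxE, hyC⟩ : x ∉ _ ∧ y ∉ _ := not_or.1 hnot
  have hy0 : 0 < y := hy.lt_of_ne' fun h0 => hyC (Or.inl (mem_insert_iff.2 (Or.inl h0)))
  have hyh' : y < h x := hyh.lt_of_ne fun heq => hyC (Or.inl (mem_insert_of_mem _ ⟨x, heq.symm⟩))
  have hyV : ∀ (k : ℤ), ∀ v ∈ V, y⁻¹ ≠ k * lam + v := fun k v hv heq =>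
    hyC (Or.inr ⟨k, mem_univ k, v, hv, (congrArg Inv.inv heq.symm).trans (inv_inv y)⟩)
  obtain ⟨m, hT⟩ := hh.exists_tilesAt x ⟨hx, hxE⟩
  obtain ⟨s, k, t, hk, hu⟩ := hT.exists_inSlot hh.nonneg hh.lt (inv_strictAnti₀ hy0 hyh')
    (fun k => by simpa only [add_zero] using hyV k 0 (mem_insert 0 _))
    (fun k v => hyV k _ (mem_insert_of_mem _ (mem_range_self v)))
  refine ⟨(s / (x + k * lam), t), ⟨x, ⟨hx, hxE⟩, s, k, rfl, hk⟩, ?_⟩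
  rw [Tnat_div_add hp.pos hx (hp.add_pos hx hk.one_le) hk.abs_sign, ← hu, one_div, inv_inv]

theorem mapsTo_Tnat_slotPoints (hp : IsRosenPair lam α) (hh : IsHeightFunction lam α E h) :
    MapsTo (Tnat lam α) (slotPoints lam α h E) (closedHypograph (rosenInterval lam α) h) := by
  rintro ⟨_, t⟩ ⟨x, hx, s, k, rfl, hk⟩
  obtain ⟨m, hT⟩ := hh.exists_tilesAt x hx
  have hle := hT.inv_le_of_inSlot hh.nonneg hh.lt hk
  have hinv := inv_pos.2 (hh.pos_of_mem x hx.1)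
  rw [Tnat_div_add hp.pos hx.1 (hp.add_pos hx.1 hk.one_le) hk.abs_sign, one_div]
  exact ⟨hx.1, inv_nonneg.2 (hinv.le.trans hle), inv_le_of_inv_le₀ (hh.pos_of_mem x hx.1) hle⟩

theorem IsHeightFunction.exists_null_bijOn (hp : IsRosenPair lam α)
    (hh : IsHeightFunction lam α E h) {Ω : Set (ℝ × ℝ)}
    (hΩ : Ω = closedHypograph (rosenInterval lam α) h) :
    ∃ N N' : Set (ℝ × ℝ), N ⊆ Ω ∧ N' ⊆ Ω ∧ volume N = 0 ∧ volume N' = 0 ∧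
      BijOn (Tnat lam α) (Ω \ N) (Ω \ N') := by
  subst hΩ
  exact _root_.exists_null_bijOn (slotPoints_subset_closedHypograph hh)
    (volume_closedHypograph_sdiff_slotPoints hp hh) (injOn_Tnat_slotPoints hp hh)
    (mapsTo_Tnat_slotPoints hp hh) (volume_closedHypograph_sdiff_image_slotPoints hp hh)

end NaturalExtension

/-! ### Step functions over the breakpoints -/

/-- The step function with value `G i` on `[b i, b (i + 1))` for `i < K`, and `0` elsewhere; the
graph of such a function bounds `Ω_α` from above. -/
noncomputable def stepFun (b G : ℕ → ℝ) (K : ℕ) (x : ℝ) : ℝ :=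
  ∑ i ∈ Finset.range K, (Ico (b i) (b (i + 1))).indicator (fun _ => G i) x

section StepFun

variable {b G : ℕ → ℝ} {K : ℕ} {x : ℝ}

theorem exists_mem_Ico_succ (hx : x ∈ Ico (b 0) (b K)) : ∃ i < K, x ∈ Ico (b i) (b (i + 1)) := by
  induction K with
  | zero => exact absurd hx.2 hx.1.not_gt
  | succ K ih =>
    rcases lt_or_ge x (b K) with hlt | hge
    · obtain ⟨i, hi, hxi⟩ := ih ⟨hx.1, hlt⟩
      exact ⟨i, hi.trans K.lt_succ_self, hxi⟩
    · exact ⟨K, K.lt_succ_self, hge, hx.2⟩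

theorem stepFun_eq (hb : Monotone b) {i : ℕ} (hi : i < K) (hx : x ∈ Ico (b i) (b (i + 1))) :
    stepFun b G K x = G i := by
  rw [stepFun, Finset.sum_eq_single_of_mem i (Finset.mem_range.2 hi), indicator_of_mem hx]
  intro j _ hji
  exact indicator_of_notMem (disjoint_right.1 (hb.pairwise_disjoint_on_Ico_succ hji) hx) _

theorem stepFun_eq_zero (hb : Monotone b) (hx : x ∉ Ico (b 0) (b K)) : stepFun b G K x = 0 := by
  refine Finset.sum_eq_zero fun i hi => indicator_of_notMem (fun hxi => hx ?_) _
  exact Ico_subset_Ico (hb i.zero_le) (hb (Finset.mem_range.1 hi)) hxi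

theorem stepFun_eq_zero_or_exists (hb : Monotone b) (x : ℝ) :
    stepFun b G K x = 0 ∨ ∃ i < K, stepFun b G K x = G i := by
  by_cases hx : x ∈ Ico (b 0) (b K)
  · obtain ⟨i, hi, hxi⟩ := exists_mem_Ico_succ hx
    exact Or.inr ⟨i, hi, stepFun_eq hb hi hxi⟩
  · exact Or.inl (stepFun_eq_zero hb hx)

theorem countable_range_stepFun (hb : Monotone b) : (range (stepFun b G K)).Countable := by
  refine ((countable_range G).insert 0).mono ?_
  rintro _ ⟨x, rfl⟩
  rcases stepFun_eq_zero_or_exists (G := G) (K := K) hb x with h0 | ⟨i, -, hi⟩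
  · exact Or.inl h0
  · exact Or.inr ⟨i, hi.symm⟩

theorem closedHypograph_stepFun (hb : Monotone b) :
    closedHypograph (Ico (b 0) (b K)) (stepFun b G K) =
      ⋃ i ∈ Finset.range K, Ico (b i) (b (i + 1)) ×ˢ Icc 0 (G i) := by
  ext ⟨x, y⟩
  simp only [closedHypograph, mem_ofPred_eq, mem_iUnion, mem_prod, Finset.mem_range, exists_prop]
  constructor
  · rintro ⟨hx, hy⟩
    obtain ⟨i, hi, hxi⟩ := exists_mem_Ico_succ hx
    rw [stepFun_eq hb hi hxi] at hy
    exact ⟨i, hi, hxi, hy⟩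
  · rintro ⟨i, hi, hxi, hy⟩
    exact ⟨Ico_subset_Ico (hb i.zero_le) (hb hi) hxi, (stepFun_eq hb hi hxi).symm ▸ hy⟩

end StepFun

/-- The breakpoints `ℓ_0, r_1, ℓ_1, r_2, …, r_{p-1}, ℓ_{p-1}, r_0` of `Ω_α`, numbered
`b 0, …, b (M + 3)` with `M = 2 (p - 2)`. The last field, `ℓ_p = r_p`, is the synchronisation of
the orbits of the two endpoints. -/
structure IsBreakpoints (lam α : ℝ) (M : ℕ) (b : ℕ → ℝ) : Prop where
  monotone : Monotone b
  zero : b 0 = (α - 1) * lam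
  one : b 1 = 1 / (α * lam) - lam
  add_two : ∀ i ≤ M, b (i + 2) = -1 / b i - lam
  neg : b (M + 1) < 0
  pos : 0 < b (M + 2)
  lt : b (M + 2) < α * lam
  last : b (M + 3) = α * lam
  synchronised : -1 / b (M + 1) = 1 / b (M + 2) + lam

/-- The heights `H_1, …, H_{2p-1}` of `Ω_α`, numbered `G 0, …, G (M + 2)` with `M = 2 (p - 2)`,
through the relations that make the slots tile the lines of reciprocal heights. -/
structure IsHeights (lam : ℝ) (M : ℕ) (G : ℕ → ℝ) : Prop where
  pos : ∀ i ≤ M + 2, 0 < G i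
  lt : ∀ i ≤ M + 2, G i < lam
  zero : G 0 = 1 / (2 * lam - G M)
  one : G 1 = 1 / lam
  add_two : ∀ i ≤ M, G (i + 2) = 1 / (lam - G i)
  add_self : G (M + 1) + G (M + 1) = lam
  add : G (M + 2) + G M = lam

theorem le_neg_one_div_iff {c d : ℝ} (hc : c < 0) (hd : 0 < d) : c ≤ -1 / d ↔ -1 / c ≤ d := by
  rw [le_div_iff₀ hd, div_le_iff_of_neg hc, mul_comm]

theorem neg_one_div_lt_iff {c d : ℝ} (hc : c < 0) (hd : 0 < d) : -1 / d < c ↔ d < -1 / c := by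
  rw [div_lt_iff₀ hd, lt_div_iff_of_neg hc, mul_comm]

section Breakpoints

variable {lam α : ℝ} {M : ℕ} {b G : ℕ → ℝ}

theorem IsBreakpoints.neg_of_le (hb : IsBreakpoints lam α M b) {i : ℕ} (hi : i ≤ M + 1) :
    b i < 0 :=
  (hb.monotone hi).trans_lt hb.neg

theorem IsBreakpoints.Ico_eq (hb : IsBreakpoints lam α M b) :
    Ico (b 0) (b (M + 3)) = rosenInterval lam α := by
  rw [hb.zero, hb.last, rosenInterval]

theorem IsBreakpoints.neg_one_div (hb : IsBreakpoints lam α M b) {i : ℕ} (hi : i ≤ M) :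
    -1 / b i = b (i + 2) + lam := by
  rw [hb.add_two i hi, sub_add_cancel]

theorem IsBreakpoints.one_div_mul_lt_one_div (hb : IsBreakpoints lam α M b) :
    1 / (α * lam) < 1 / b (M + 2) :=
  one_div_lt_one_div_of_lt hb.pos hb.lt

theorem IsBreakpoints.stepFun_neg_one_div (hb : IsBreakpoints lam α M b) {i : ℕ} (hi : i ≤ M)
    {d : ℝ} (hd : 0 < d) (hle : -1 / b i ≤ d) (hlt : d < -1 / b (i + 1)) :
    stepFun b G (M + 3) (-1 / d) = G i :=
  stepFun_eq hb.monotone (by omega)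
    ⟨(le_neg_one_div_iff (hb.neg_of_le (by omega)) hd).2 hle,
      (neg_one_div_lt_iff (hb.neg_of_le (by omega)) hd).2 hlt⟩

theorem IsBreakpoints.stepFun_neg_one_div_of_ge (hb : IsBreakpoints lam α M b) {d : ℝ}
    (hd : 0 < d) (hle : -1 / b (M + 1) ≤ d) : stepFun b G (M + 3) (-1 / d) = G (M + 1) :=
  stepFun_eq hb.monotone (by omega)
    ⟨(le_neg_one_div_iff hb.neg hd).2 hle, (div_neg_of_neg_of_pos (by norm_num) hd).trans hb.pos⟩

theorem IsBreakpoints.stepFun_neg_one_div_of_lt (hb : IsBreakpoints lam α M b) {d : ℝ}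
    (hd : 0 < d) (hlt : d < -1 / b 0) : stepFun b G (M + 3) (-1 / d) = 0 :=
  stepFun_eq_zero hb.monotone fun hmem =>
    hmem.1.not_gt ((neg_one_div_lt_iff (hb.neg_of_le (by omega)) hd).2 hlt)

theorem IsBreakpoints.stepFun_one_div_of_le (hb : IsBreakpoints lam α M b) {d : ℝ}
    (hgt : 1 / (α * lam) < d) (hle : d ≤ 1 / b (M + 2)) :
    stepFun b G (M + 3) (1 / d) = G (M + 2) := by
  have hαlam : 0 < α * lam := hb.pos.trans hb.lt
  have hd : 0 < d := (one_div_pos.2 hαlam).trans hgt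
  refine stepFun_eq hb.monotone (by omega) ⟨(le_one_div hd hb.pos).1 hle, ?_⟩
  rw [hb.last]
  exact (one_div_lt hαlam hd).1 hgt

theorem IsBreakpoints.stepFun_one_div_of_gt (hb : IsBreakpoints lam α M b) {d : ℝ}
    (hgt : 1 / b (M + 2) < d) : stepFun b G (M + 3) (1 / d) = G (M + 1) := by
  have hd : 0 < d := (one_div_pos.2 hb.pos).trans hgt
  exact stepFun_eq hb.monotone (by omega)
    ⟨hb.neg.le.trans (one_div_pos.2 hd).le, (one_div_lt hb.pos hd).1 hgt⟩

theorem IsBreakpoints.stepFun_one_div_eq_zero (hb : IsBreakpoints lam α M b) {d : ℝ}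
    (hd : 0 < d) (hle : d ≤ 1 / (α * lam)) : stepFun b G (M + 3) (1 / d) = 0 := by
  refine stepFun_eq_zero hb.monotone fun hmem => hmem.2.not_ge ?_
  rw [hb.last]
  exact (le_one_div hd (hb.pos.trans hb.lt)).1 hle

theorem IsBreakpoints.stepFun_add_stepFun (hp : IsRosenPair lam α) (hb : IsBreakpoints lam α M b)
    (hG : IsHeights lam M G) {d : ℝ} (hgt : 1 / (α * lam) < d) (hne : d ≠ 1 / b (M + 2)) :
    stepFun b G (M + 3) (1 / d) + stepFun b G (M + 3) (-1 / (d + lam)) = lam := by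
  have hd1 : 1 < d := (one_lt_one_div hp.mul_pos hp.mul_lt_one).trans hgt
  have hd : 0 < d + lam := by linarith [hp.pos]
  rcases hne.lt_or_gt with hlt | hgt'
  · have hle : -1 / b M ≤ d + lam := by
      rw [hb.neg_one_div le_rfl]
      linarith [hb.lt, hp.mul_lt_one]
    have hlt' : d + lam < -1 / b (M + 1) := by linarith [hb.synchronised]
    rw [hb.stepFun_one_div_of_le hgt hlt.le, hb.stepFun_neg_one_div le_rfl hd hle hlt', hG.add]
  · have hle : -1 / b (M + 1) ≤ d + lam := by linarith [hb.synchronised]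
    rw [hb.stepFun_one_div_of_gt hgt', hb.stepFun_neg_one_div_of_ge hd hle, hG.add_self]

theorem IsRosenPair.one_div_lt_add {x : ℝ} (hp : IsRosenPair lam α)
    (hx : x ∈ rosenInterval lam α) {k : ℤ} (hk : 2 ≤ k) : 1 / (α * lam) < x + k * lam := by
  have hk' : (2 : ℝ) ≤ k := mod_cast hk
  have hlam2 : 2 ≤ lam ^ 2 := (Real.sqrt_le_left hp.pos.le).1 hp.sqrt_two_le
  have hα : 0 < α + 1 := by linarith [hp.half_lt]
  have hlow : (α + 1) * lam ≤ x + k * lam := by nlinarith [hx.1, hp.pos]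
  refine lt_of_lt_of_le ((div_lt_iff₀ hp.mul_pos).2 ?_) hlow
  have hαα : 1 / 2 < (α + 1) * α := by nlinarith [hp.half_lt]
  nlinarith

theorem IsBreakpoints.add_three_add_le (hp : IsRosenPair lam α) (hb : IsBreakpoints lam α M b)
    {i : ℕ} (hi : i ≤ M) : b (i + 3) + lam ≤ -1 / b (i + 1) := by
  rcases hi.eq_or_lt with rfl | hlt
  · have h1 := one_lt_one_div hp.mul_pos hp.mul_lt_one
    linarith [hb.synchronised, hb.last, hb.one_div_mul_lt_one_div, hp.mul_lt_one]
  · exact (hb.neg_one_div hlt).ge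

theorem IsBreakpoints.tilesAt_one (hp : IsRosenPair lam α) (hb : IsBreakpoints lam α M b)
    (hG : IsHeights lam M G) {x : ℝ} (hx : x ∈ rosenInterval lam α) (hx1 : b 1 < x)
    (hne : ∀ k : ℤ, x + k * lam ≠ 1 / b (M + 2)) : TilesAt lam (stepFun b G (M + 3)) x 1 where
  eq_zero := by intros; omega
  inv_eq := by
    have hpos : 0 < x + lam := by simpa using hp.add_pos hx le_rfl
    rw [Int.cast_one, one_mul]
    obtain ⟨_ | _ | i, hi, hxi⟩ := exists_mem_Ico_succ (hb.Ico_eq.symm ▸ hx)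
    · exact absurd hxi.2 hx1.not_gt
    · have hlt : x + lam < -1 / b 0 := by linarith [hb.neg_one_div M.zero_le, hxi.2]
      rw [stepFun_eq hb.monotone hi hxi, hb.stepFun_neg_one_div_of_lt hpos hlt, hG.one, one_div,
        inv_inv, sub_zero]
    · have hiM : i ≤ M := by omega
      have hle : -1 / b i ≤ x + lam := by linarith [hb.neg_one_div hiM, hxi.1]
      have hlt : x + lam < -1 / b (i + 1) := by linarith [hb.add_three_add_le hp hiM, hxi.2]
      rw [stepFun_eq hb.monotone hi hxi, hb.stepFun_neg_one_div hiM hpos hle hlt,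
        hG.add_two i hiM, one_div, inv_inv]
  add_eq k hk := by
    have hgt : 1 / (α * lam) < x + k * lam := by
      have hk' : (1 : ℝ) ≤ k := mod_cast hk
      nlinarith [hb.one, hp.pos]
    rw [add_one_mul, ← add_assoc]
    exact hb.stepFun_add_stepFun hp hG hgt (hne k)
  one_le := le_rfl

theorem IsBreakpoints.tilesAt_two (hp : IsRosenPair lam α) (hb : IsBreakpoints lam α M b)
    (hG : IsHeights lam M G) {x : ℝ} (hx : x ∈ rosenInterval lam α) (hx1 : x < b 1)
    (hne : ∀ k : ℤ, x + k * lam ≠ 1 / b (M + 2)) : TilesAt lam (stepFun b G (M + 3)) x 2 where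
  eq_zero k hk hk2 s hs := by
    obtain rfl : k = 1 := by omega
    have hpos := hp.add_pos hx le_rfl
    rw [Int.cast_one, one_mul] at hpos ⊢
    rcases eq_or_eq_neg_of_abs_eq hs with rfl | rfl
    · exact hb.stepFun_one_div_eq_zero hpos (by linarith [hb.one])
    · refine hb.stepFun_neg_one_div_of_lt hpos ?_
      linarith [hb.neg_one_div M.zero_le, hb.monotone one_le_two]
  inv_eq := by
    have hpos : 0 < x + 2 * lam := by simpa using hp.add_pos hx one_le_two
    have hadd : α * lam ≤ x + lam := by simpa using hp.mul_le_add hx le_rfl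
    have hle : -1 / b M ≤ x + 2 * lam := by linarith [hb.neg_one_div le_rfl, hb.lt]
    have hlt : x + 2 * lam < -1 / b (M + 1) := by
      linarith [hb.synchronised, hb.one, hb.one_div_mul_lt_one_div]
    have hx0 : x ∈ Ico (b 0) (b 1) := ⟨hb.zero.trans_le hx.1, hx1⟩
    rw [Int.cast_ofNat, stepFun_eq hb.monotone (by omega) hx0,
      hb.stepFun_neg_one_div le_rfl hpos hle hlt, hG.zero, one_div, inv_inv]
  add_eq k hk := by
    rw [add_one_mul, ← add_assoc]
    exact hb.stepFun_add_stepFun hp hG (hp.one_div_lt_add hx hk) (hne k)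
  one_le := one_le_two

theorem IsBreakpoints.isHeightFunction_stepFun (hp : IsRosenPair lam α)
    (hb : IsBreakpoints lam α M b) (hG : IsHeights lam M G) :
    IsHeightFunction lam α (insert (b 1) (range fun k : ℤ => 1 / b (M + 2) - k * lam))
      (stepFun b G (M + 3)) where
  countable_exceptional := (countable_range _).insert _
  countable_range := countable_range_stepFun hb.monotone
  pos_of_mem x hx := by
    obtain ⟨i, hi, hxi⟩ := exists_mem_Ico_succ (hb.Ico_eq.symm ▸ hx)
    rw [stepFun_eq hb.monotone hi hxi]
    exact hG.pos i (by omega)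
  eq_zero_of_notMem x hx := stepFun_eq_zero hb.monotone (hb.Ico_eq.symm ▸ hx)
  lt x := by
    rcases stepFun_eq_zero_or_exists (G := G) (K := M + 3) hb.monotone x with h0 | ⟨i, hi, hGi⟩
    · exact h0.trans_lt hp.pos
    · exact hGi.trans_lt (hG.lt i (by omega))
  exists_tilesAt := by
    rintro x ⟨hx, hxE⟩
    obtain ⟨hx1, hxk⟩ := not_or.1 hxE
    have hne : ∀ k : ℤ, x + k * lam ≠ 1 / b (M + 2) := fun k hk =>
      hxk ⟨k, sub_eq_of_eq_add hk.symm⟩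
    rcases lt_or_gt_of_ne hx1 with hlt | hgt
    · exact ⟨2, hb.tilesAt_two hp hG hx hlt hne⟩
    · exact ⟨1, hb.tilesAt_one hp hG hx hgt hne⟩

theorem IsBreakpoints.mem_rosenInterval (hb : IsBreakpoints lam α M b) {i : ℕ} (hi : i ≤ M + 2) :
    b i ∈ rosenInterval lam α :=
  ⟨hb.zero.symm.trans_le (hb.monotone i.zero_le), (hb.monotone hi).trans_lt hb.lt⟩

theorem IsBreakpoints.Tmap_eq (hlam : 0 < lam) (hb : IsBreakpoints lam α M b) {i : ℕ}
    (hi : i ≤ M) : Tmap lam α (b i) = b (i + 2) := by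
  have hneg : b i < 0 := hb.neg_of_le (by omega)
  have hdigit : |1 / b i| - lam * (1 : ℤ) = b (i + 2) := by
    rw [abs_of_neg (one_div_neg.2 hneg), hb.add_two i hi, Int.cast_one, mul_one, neg_div]
  rw [Tmap_eq_of_mem hlam hneg.ne (hdigit ▸ hb.mem_rosenInterval (by omega)), hdigit]

theorem IsBreakpoints.Tmap_mul (hlam : 0 < lam) (hb : IsBreakpoints lam α M b) :
    Tmap lam α (α * lam) = b 1 := by
  have hpos : 0 < α * lam := hb.pos.trans hb.lt
  have hdigit : |1 / (α * lam)| - lam * (1 : ℤ) = b 1 := by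
    rw [abs_of_pos (one_div_pos.2 hpos), hb.one, Int.cast_one, mul_one]
  rw [Tmap_eq_of_mem hlam hpos.ne' (hdigit ▸ hb.mem_rosenInterval (by omega)), hdigit]

theorem IsBreakpoints.iterate_Tmap (hlam : 0 < lam) (hb : IsBreakpoints lam α M b) {i n : ℕ}
    (hi : i + 2 * n ≤ M + 2) : (Tmap lam α)^[n] (b i) = b (i + 2 * n) := by
  induction n with
  | zero => rfl
  | succ n ih =>
    rw [Function.iterate_succ_apply', ih (by omega), hb.Tmap_eq hlam (by omega)]
    rfl

end Breakpoints

theorem biUnion_range_two_mul_add_one {X : Type*} (A : ℕ → Set X) (m : ℕ) :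
    ⋃ i ∈ Finset.range (2 * m + 1), A i =
      (⋃ n ∈ Finset.Icc 1 m, A (2 * (n - 1))) ∪ (⋃ n ∈ Finset.Icc 1 m, A (2 * (n - 1) + 1)) ∪
        A (2 * m) := by
  ext x
  simp only [mem_union, mem_iUnion, Finset.mem_range, Finset.mem_Icc, exists_prop]
  constructor
  · rintro ⟨i, hi, hx⟩
    obtain ⟨n, rfl | rfl⟩ := i.even_or_odd'
    · rcases (show n ≤ m by omega).eq_or_lt with rfl | hn
      · exact Or.inr hx
      · exact Or.inl (Or.inl ⟨n + 1, by omega, hx⟩)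
    · exact Or.inl (Or.inr ⟨n + 1, by omega, hx⟩)
  · rintro ((⟨n, hn, hx⟩ | ⟨n, hn, hx⟩) | hx)
    · exact ⟨_, by omega, hx⟩
    · exact ⟨_, by omega, hx⟩
    · exact ⟨_, by omega, hx⟩

theorem IsBreakpoints.closedHypograph_eq {lam α : ℝ} {m P : ℕ} {b G ℓ r Hodd Heven : ℕ → ℝ}
    (hlam : 0 < lam) (hb : IsBreakpoints lam α (2 * P) b) (hm : m = P + 1)
    (hℓ : ∀ n, ℓ n = (Tmap lam α)^[n] ((α - 1) * lam))
    (hr : ∀ n, r n = (Tmap lam α)^[n] (α * lam))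
    (hodd : ∀ n, Hodd (n + 1) = G (2 * n)) (heven : ∀ n, Heven (n + 1) = G (2 * n + 1)) :
    closedHypograph (rosenInterval lam α) (stepFun b G (2 * P + 3)) =
      (⋃ n ∈ Finset.Icc 1 m, Ico (ℓ (n - 1)) (r n) ×ˢ Icc 0 (Hodd n)) ∪
        (⋃ n ∈ Finset.Icc 1 m, Ico (r n) (ℓ n) ×ˢ Icc 0 (Heven n)) ∪
        Ico (ℓ m) (r 0) ×ˢ Icc 0 (Hodd (m + 1)) := by
  subst hm
  have hℓb : ∀ n ≤ P + 1, ℓ n = b (2 * n) := fun n hn => by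
    rw [hℓ, ← hb.zero, hb.iterate_Tmap hlam (by omega), zero_add]
  have hrb : ∀ n ≤ P, r (n + 1) = b (2 * n + 1) := fun n hn => by
    rw [hr, Function.iterate_succ_apply, hb.Tmap_mul hlam, hb.iterate_Tmap hlam (by omega),
      add_comm]
  rw [← hb.Ico_eq, closedHypograph_stepFun hb.monotone,
    show 2 * P + 3 = 2 * (P + 1) + 1 by ring, biUnion_range_two_mul_add_one]
  refine congrArg₂ _ (congrArg₂ _ (iUnion₂_congr fun n hn => ?_) (iUnion₂_congr fun n hn => ?_)) ?_
  · obtain ⟨n, rfl⟩ := Nat.exists_eq_add_of_le' (Finset.mem_Icc.1 hn).1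
    have hnP : n ≤ P := by simpa using hn
    rw [Nat.add_sub_cancel, hℓb n (by omega), hrb n hnP, hodd]
  · obtain ⟨n, rfl⟩ := Nat.exists_eq_add_of_le' (Finset.mem_Icc.1 hn).1
    have hnP : n ≤ P := by simpa using hn
    rw [Nat.add_sub_cancel, hℓb (n + 1) (by omega), hrb n hnP, heven]
    rfl
  · rw [hℓb _ le_rfl, hr 0, Function.iterate_zero_apply, ← hb.last, hodd]
    rfl

/-! ### Heights and breakpoints as sine quotients -/

open Real

/-- The quotient `sin s / sin (s + θ)`. Both the heights and, up to a shift by `λ = 2 cos θ`, the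
breakpoints of `Ω_α` are values of this function, on which `y ↦ 1 / (λ - y)` acts as the translation
`s ↦ s + θ`. -/
noncomputable def sinRatio (θ s : ℝ) : ℝ := sin s / sin (s + θ)

section SinRatio

variable {θ : ℝ}

theorem sinRatio_add {s : ℝ} (hs : sin (s + θ) ≠ 0) :
    sinRatio θ (s + θ) = 1 / (2 * cos θ - sinRatio θ s) := by
  have hsin : sin (s + θ + θ) = 2 * cos θ * sin (s + θ) - sin s := by
    have hprod := two_mul_sin_mul_cos (s + θ) θ
    rw [add_sub_cancel_right] at hprod
    linarith
  rw [sinRatio, sinRatio, hsin, ← one_div_div, sub_div, mul_div_cancel_right₀ _ hs]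

theorem sinRatio_zero : sinRatio θ 0 = 0 := by
  rw [sinRatio, sin_zero, zero_div]

theorem sinRatio_neg_half (hθ : sin (θ / 2) ≠ 0) : sinRatio θ (-(θ / 2)) = -1 := by
  rw [sinRatio, neg_add_eq_sub, sub_half, sin_neg, neg_div, div_self hθ]

theorem sinRatio_pi_div_two_sub (s : ℝ) : sinRatio θ (π / 2 - s) = cos s / cos (s - θ) := by
  rw [sinRatio, sin_pi_div_two_sub, ← sin_pi_div_two_sub (s - θ)]
  ring_nf

theorem sinRatio_pi_sub (s : ℝ) : sinRatio θ (π - s) = sin s / sin (s - θ) := by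
  rw [sinRatio, sin_pi_sub, ← sin_pi_sub (s - θ)]
  ring_nf

theorem sin_add_pos_of_mem {s : ℝ} (hs : s ∈ Ioo (-θ) (π - θ)) : 0 < sin (s + θ) :=
  sin_pos_of_pos_of_lt_pi (by linarith [hs.1]) (by linarith [hs.2])

theorem strictMonoOn_sinRatio (hθ : 0 < sin θ) : StrictMonoOn (sinRatio θ) (Ioo (-θ) (π - θ)) := by
  intro s hs t ht hst
  have hdiff : sin t * sin (s + θ) - sin s * sin (t + θ) = sin θ * sin (t - s) := by
    rw [sin_add, sin_add, sin_sub]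
    ring
  have hpos : 0 < sin θ * sin (t - s) :=
    mul_pos hθ (sin_pos_of_pos_of_lt_pi (by linarith) (by linarith [hs.1, ht.2]))
  rw [sinRatio, sinRatio, div_lt_div_iff₀ (sin_add_pos_of_mem hs) (sin_add_pos_of_mem ht)]
  linarith

theorem sinRatio_pi_sub_two_mul (hθ : sin θ ≠ 0) : sinRatio θ (π - 2 * θ) = 2 * cos θ := by
  rw [sinRatio_pi_sub, two_mul θ, add_sub_cancel_right, ← two_mul, sin_two_mul,
    mul_right_comm, mul_div_cancel_right₀ _ hθ]

end SinRatio

/-- The angle `θ = π / q` for `q = 2 p`, `p = P + 2`. -/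
structure IsRosenAngle (P : ℕ) (θ : ℝ) : Prop where
  mul_eq : (P + 2) * θ = π / 2

/-- The heights of `Ω_α`, with `rosenHeight θ i` standing for `H_{i+1}` and `θ = π / q`. -/
noncomputable def rosenHeight (θ : ℝ) (i : ℕ) : ℝ := sinRatio θ ((i + 1) * (θ / 2))

section Heights

variable {θ : ℝ} {P : ℕ}

theorem IsRosenAngle.pos (hθ : IsRosenAngle P θ) : 0 < θ :=
  pos_of_mul_pos_right (hθ.mul_eq ▸ pi_div_two_pos) (by positivity)

theorem IsRosenAngle.le_pi_div_four (hθ : IsRosenAngle P θ) : θ ≤ π / 4 := by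
  have hP : 0 ≤ P * θ := mul_nonneg P.cast_nonneg hθ.pos.le
  linarith [hθ.mul_eq]

theorem IsRosenAngle.sin_pos (hθ : IsRosenAngle P θ) : 0 < sin θ :=
  sin_pos_of_pos_of_lt_pi hθ.pos (by linarith [hθ.le_pi_div_four, pi_pos])

theorem IsRosenAngle.sin_half_pos (hθ : IsRosenAngle P θ) : 0 < sin (θ / 2) :=
  sin_pos_of_pos_of_lt_pi (half_pos hθ.pos) (by linarith [hθ.le_pi_div_four, pi_pos])

theorem rosenHeight_two_mul (hθ : sin (θ / 2) ≠ 0) (n : ℕ) :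
    rosenHeight θ (2 * n) = (cos ((n + 1) * θ) - cos (n * θ)) /
      (cos ((n + 2) * θ) - cos ((n + 1) * θ)) := by
  have hnum : cos ((n + 1) * θ) - cos (n * θ) =
      sin ((2 * n + 1) * (θ / 2)) * (-2 * sin (θ / 2)) := by
    rw [cos_sub_cos]
    ring_nf
  have hden : cos ((n + 2) * θ) - cos ((n + 1) * θ) =
      sin ((2 * n + 1) * (θ / 2) + θ) * (-2 * sin (θ / 2)) := by
    rw [cos_sub_cos]
    ring_nf
  rw [hnum, hden, mul_div_mul_right _ _ (mul_ne_zero (by norm_num) hθ), rosenHeight, sinRatio]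
  push_cast
  rfl

theorem rosenHeight_two_mul_add_one (θ : ℝ) (n : ℕ) :
    rosenHeight θ (2 * n + 1) = sin ((n + 1) * θ) / sin ((n + 2) * θ) := by
  rw [rosenHeight, sinRatio]
  push_cast
  ring_nf

theorem rosenHeight_zero (hθ : sin (θ / 2) ≠ 0) : rosenHeight θ 0 = 1 / (2 * cos θ + 1) := by
  have hangle : -(θ / 2) + θ = θ / 2 := by ring
  have hrec := sinRatio_add (θ := θ) (s := -(θ / 2)) (hangle.symm ▸ hθ)
  rw [sinRatio_neg_half hθ, hangle, sub_neg_eq_add] at hrec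
  rw [rosenHeight, ← hrec, Nat.cast_zero, zero_add, one_mul]

theorem rosenHeight_one (hθ : sin θ ≠ 0) : rosenHeight θ 1 = 1 / (2 * cos θ) := by
  have hrec := sinRatio_add (θ := θ) (s := 0) ((zero_add θ).symm ▸ hθ)
  rw [sinRatio_zero, sub_zero, zero_add] at hrec
  rw [rosenHeight, Nat.cast_one, one_add_one_eq_two, mul_div_cancel₀ θ two_ne_zero, hrec]

theorem rosenHeight_two_mul_add_one_eq_cos (hθ : IsRosenAngle P θ) :
    rosenHeight θ (2 * P + 1) = cos θ := by
  have hangle : ((2 * P + 1 : ℕ) + 1) * (θ / 2) = π / 2 - θ := by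
    push_cast
    linarith [hθ.mul_eq]
  rw [rosenHeight, hangle, sinRatio_pi_div_two_sub, sub_self, cos_zero, div_one]

theorem rosenHeight_two_mul_add_two (hθ : IsRosenAngle P θ) : rosenHeight θ (2 * P + 2) = 1 := by
  have hθ0 := hθ.pos
  have hangle : ((2 * P + 2 : ℕ) + 1) * (θ / 2) = π / 2 - θ / 2 := by
    push_cast
    linarith [hθ.mul_eq]
  have hcos : 0 < cos (θ / 2) :=
    cos_pos_of_mem_Ioo ⟨by linarith [pi_pos], by linarith [hθ.le_pi_div_four, pi_pos]⟩
  rw [rosenHeight, hangle, sinRatio_pi_div_two_sub, show θ / 2 - θ = -(θ / 2) by ring, cos_neg,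
    div_self hcos.ne']

theorem mul_half_mem_Ioc (hθ : IsRosenAngle P θ) {i : ℕ} (hi : i ≤ 2 * P + 2) :
    (i + 1) * (θ / 2) ∈ Ioc 0 (π / 2 - θ / 2) := by
  have hθ0 := hθ.pos
  have hi' : (i : ℝ) ≤ 2 * P + 2 := mod_cast hi
  exact ⟨by positivity, by nlinarith [hθ.mul_eq]⟩

theorem rosenHeight_add_two (hθ : IsRosenAngle P θ) {i : ℕ} (hi : i ≤ 2 * P) :
    rosenHeight θ (i + 2) = 1 / (2 * cos θ - rosenHeight θ i) := by
  have hθ0 := hθ.pos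
  obtain ⟨hlow, hhigh⟩ := mul_half_mem_Ioc hθ (i := i) (by omega)
  have hmem : (i + 1) * (θ / 2) ∈ Ioo (-θ) (π - θ) :=
    ⟨by linarith, by linarith [hθ.le_pi_div_four, pi_pos]⟩
  rw [rosenHeight, rosenHeight, ← sinRatio_add (sin_add_pos_of_mem hmem).ne']
  push_cast
  ring_nf

theorem isHeights_rosenHeight (hθ : IsRosenAngle P θ) :
    IsHeights (2 * cos θ) (2 * P) (rosenHeight θ) := by
  have hθ0 := hθ.pos
  have hθ4 := hθ.le_pi_div_four
  have hsin : 0 < sin θ := hθ.sin_pos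
  have hlast : rosenHeight θ (2 * P + 2) + rosenHeight θ (2 * P) = 2 * cos θ := by
    have hrec := rosenHeight_add_two hθ le_rfl
    rw [rosenHeight_two_mul_add_two hθ, eq_comm, one_div, inv_eq_one] at hrec
    rw [rosenHeight_two_mul_add_two hθ, ← hrec, sub_add_cancel]
  exact
  { pos := fun i hi => by
      obtain ⟨hlow, hhigh⟩ := mul_half_mem_Ioc hθ hi
      exact div_pos (sin_pos_of_pos_of_lt_pi hlow (by linarith))
        (sin_pos_of_pos_of_lt_pi (by linarith) (by linarith))
    lt := fun i hi => by
      obtain ⟨hlow, hhigh⟩ := mul_half_mem_Ioc hθ hi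
      rw [← sinRatio_pi_sub_two_mul hsin.ne']
      exact strictMonoOn_sinRatio hsin ⟨by linarith, by linarith⟩
        ⟨by linarith, by linarith⟩ (by linarith)
    zero := by
      rw [rosenHeight_zero hθ.sin_half_pos.ne']
      congr 1
      linarith [rosenHeight_two_mul_add_two hθ]
    one := rosenHeight_one hsin.ne'
    add_two := fun i hi => rosenHeight_add_two hθ hi
    add_self := by rw [rosenHeight_two_mul_add_one_eq_cos hθ, two_mul]
    add := hlast }

end Heights

/-- Angles parametrising the breakpoints of `Ω_α`, where `θ = π / q` and the angle `φ` encodes `α`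
through `αλ = sinRatio θ (π / 2 - θ + φ)`. -/
noncomputable def breakAngle (θ φ : ℝ) : ℕ → ℝ
  | 0 => π / 2 - θ + φ
  | 1 => π / 2 - φ
  | i + 2 => breakAngle θ φ i + θ

/-- The breakpoints `ℓ_0, r_1, ℓ_1, …, ℓ_{p-1}, r_0` of `Ω_α` for `p = P + 2`, equal to `r_0` from
index `2 * P + 3` on. -/
noncomputable def rosenBreakpoint (θ φ : ℝ) (P i : ℕ) : ℝ :=
  if i < 2 * P + 3 then sinRatio θ (breakAngle θ φ i) - 2 * cos θ
  else sinRatio θ (breakAngle θ φ 0)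

section Breakpoint

variable {θ φ α : ℝ} {P : ℕ}

theorem exists_sinRatio_eq (hθ : IsRosenAngle P θ) {c : ℝ} (hc : c ∈ Ioo (cos θ) 1) :
    ∃ φ ∈ Ioo 0 (θ / 2), sinRatio θ (π / 2 - θ + φ) = c := by
  have hθ0 := hθ.pos
  have hcos : ∀ φ ∈ Icc 0 (θ / 2), 0 < cos φ := fun φ hφ =>
    cos_pos_of_mem_Ioo ⟨by linarith [hφ.1, pi_pos],
      by linarith [hφ.2, hθ.le_pi_div_four, pi_pos]⟩
  have hf : ∀ φ, sinRatio θ (π / 2 - θ + φ) = cos (θ - φ) / cos φ := fun φ => by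
    rw [sub_add, sinRatio_pi_div_two_sub, sub_sub_cancel_left, cos_neg]
  have hcont : ContinuousOn (fun φ => cos (θ - φ) / cos φ) (Icc 0 (θ / 2)) :=
    ContinuousOn.div (by fun_prop) (by fun_prop) fun φ hφ => (hcos φ hφ).ne'
  have h_half : cos (θ / 2) ≠ 0 := (hcos _ ⟨by linarith, le_rfl⟩).ne'
  have hivt := intermediate_value_Ioo (by linarith) hcont
  simp only [sub_zero, cos_zero, div_one, sub_half, div_self h_half] at hivt
  obtain ⟨φ, hφ, hφc⟩ := hivt hc
  exact ⟨φ, hφ, (hf φ).trans hφc⟩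

theorem strictMono_breakAngle (hφ : φ ∈ Ioo 0 (θ / 2)) : StrictMono (breakAngle θ φ) := by
  refine strictMono_nat_of_lt_succ fun i => ?_
  induction i using Nat.twoStepInduction with
  | zero =>
    simp only [breakAngle]
    linarith [hφ.2]
  | one =>
    simp only [breakAngle]
    linarith [hφ.1]
  | more i ih _ => exact add_lt_add_left ih θ

theorem breakAngle_add_two_mul (θ φ : ℝ) (i n : ℕ) :
    breakAngle θ φ (i + 2 * n) = breakAngle θ φ i + n * θ := by
  induction n with
  | zero => simp
  | succ n ih =>
    rw [mul_add_one, ← add_assoc, breakAngle, ih]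
    push_cast
    ring

theorem breakAngle_two_mul_add_one (hθ : IsRosenAngle P θ) :
    breakAngle θ φ (2 * P + 1) = π - 2 * θ - φ := by
  rw [add_comm, breakAngle_add_two_mul, breakAngle]
  linarith [hθ.mul_eq]

theorem breakAngle_two_mul_add_two (hθ : IsRosenAngle P θ) :
    breakAngle θ φ (2 * P + 2) = π - 2 * θ + φ := by
  rw [breakAngle, ← zero_add (2 * P), breakAngle_add_two_mul, breakAngle]
  linarith [hθ.mul_eq]

theorem breakAngle_mem_Ioo (hθ : IsRosenAngle P θ) (hφ : φ ∈ Ioo 0 (θ / 2)) {i : ℕ}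
    (hi : i ≤ 2 * P + 2) : breakAngle θ φ i ∈ Ioo (-θ) (π - θ) := by
  have hmono := (strictMono_breakAngle hφ).monotone
  have hlow := hmono i.zero_le
  have hhigh := hmono hi
  rw [breakAngle_two_mul_add_two hθ] at hhigh
  rw [breakAngle] at hlow
  exact ⟨by linarith [hφ.1, pi_pos], by linarith [hφ.1, hφ.2]⟩

theorem rosenBreakpoint_of_lt {i : ℕ} (hi : i < 2 * P + 3) :
    rosenBreakpoint θ φ P i = sinRatio θ (breakAngle θ φ i) - 2 * cos θ :=
  if_pos hi

theorem rosenBreakpoint_of_le {i : ℕ} (hi : 2 * P + 3 ≤ i) :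
    rosenBreakpoint θ φ P i = sinRatio θ (breakAngle θ φ 0) :=
  if_neg hi.not_gt

theorem neg_one_div_rosenBreakpoint (hθ : IsRosenAngle P θ) (hφ : φ ∈ Ioo 0 (θ / 2)) {i : ℕ}
    (hi : i ≤ 2 * P + 2) :
    -1 / rosenBreakpoint θ φ P i = sinRatio θ (breakAngle θ φ (i + 2)) := by
  rw [breakAngle, sinRatio_add (sin_add_pos_of_mem (breakAngle_mem_Ioo hθ hφ hi)).ne',
    rosenBreakpoint_of_lt (by omega), neg_div, ← div_neg, neg_sub]

theorem rosenBreakpoint_lt_succ (hθ : IsRosenAngle P θ) (hφ : φ ∈ Ioo 0 (θ / 2)) {i : ℕ}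
    (hi : i < 2 * P + 2) : rosenBreakpoint θ φ P i < rosenBreakpoint θ φ P (i + 1) := by
  rw [rosenBreakpoint_of_lt (by omega), rosenBreakpoint_of_lt (by omega), sub_lt_sub_iff_right]
  exact strictMonoOn_sinRatio hθ.sin_pos (breakAngle_mem_Ioo hθ hφ hi.le)
    (breakAngle_mem_Ioo hθ hφ hi) (strictMono_breakAngle hφ i.lt_succ_self)

theorem rosenBreakpoint_two_mul_add_one_neg (hθ : IsRosenAngle P θ) (hφ : φ ∈ Ioo 0 (θ / 2)) :
    rosenBreakpoint θ φ P (2 * P + 1) < 0 := by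
  have hθ0 := hθ.pos
  have hmem := breakAngle_mem_Ioo hθ hφ (i := 2 * P + 1) (by omega)
  rw [rosenBreakpoint_of_lt (by omega), sub_neg, ← sinRatio_pi_sub_two_mul hθ.sin_pos.ne']
  rw [breakAngle_two_mul_add_one hθ] at hmem ⊢
  exact strictMonoOn_sinRatio hθ.sin_pos hmem
    ⟨by linarith [hmem.1, hφ.1], by linarith⟩ (by linarith [hφ.1])

theorem rosenBreakpoint_two_mul_add_two (hθ : IsRosenAngle P θ) (hφ : φ ∈ Ioo 0 (θ / 2)) :
    rosenBreakpoint θ φ P (2 * P + 2) = sin φ / sin (θ - φ) := by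
  have hsin : sin (θ - φ) ≠ 0 := (sin_pos_of_pos_of_lt_pi (by linarith [hφ.1, hφ.2])
    (by linarith [hφ.1, hθ.le_pi_div_four, pi_pos])).ne'
  have hadd : sin (2 * θ - φ) - 2 * cos θ * sin (θ - φ) = sin φ := by
    have hprod := two_mul_sin_mul_cos (θ - φ) θ
    rw [sub_sub_cancel_left, sin_neg, sub_add_eq_add_sub, ← two_mul] at hprod
    linarith
  have hangle : π - 2 * θ + φ = π - (2 * θ - φ) := by ring
  have hangle' : 2 * θ - φ - θ = θ - φ := by ring
  rw [rosenBreakpoint_of_lt (by omega), breakAngle_two_mul_add_two hθ, hangle, sinRatio_pi_sub,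
    hangle', div_sub' hsin, mul_comm (sin (θ - φ)), hadd]

theorem rosenBreakpoint_synchronised (hθ : IsRosenAngle P θ) (hφ : φ ∈ Ioo 0 (θ / 2)) :
    -1 / rosenBreakpoint θ φ P (2 * P + 1) = 1 / rosenBreakpoint θ φ P (2 * P + 2) + 2 * cos θ := by
  have hsin : sin φ ≠ 0 := (sin_pos_of_pos_of_lt_pi hφ.1
    (by linarith [hφ.2, hθ.le_pi_div_four, pi_pos])).ne'
  have hadd : sin (θ + φ) = sin (θ - φ) + 2 * cos θ * sin φ := by
    rw [sin_add, sin_sub]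
    ring
  have hangle : breakAngle θ φ (2 * P + 1 + 2) = π - (θ + φ) := by
    rw [breakAngle, breakAngle_two_mul_add_one hθ]
    ring
  rw [neg_one_div_rosenBreakpoint hθ hφ (by omega), rosenBreakpoint_two_mul_add_two hθ hφ, hangle,
    sinRatio_pi_sub, add_sub_cancel_left, one_div_div, hadd, add_div,
    mul_div_cancel_right₀ _ hsin]

theorem rosenBreakpoint_two_mul_add_two_lt (hθ : IsRosenAngle P θ) (hφ : φ ∈ Ioo 0 (θ / 2)) :
    rosenBreakpoint θ φ P (2 * P + 2) < rosenBreakpoint θ φ P (2 * P + 3) := by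
  have hθ4 := hθ.le_pi_div_four
  have hsin : 0 < sin (θ - φ) :=
    sin_pos_of_pos_of_lt_pi (by linarith [hφ.1, hφ.2]) (by linarith [hφ.1, pi_pos])
  have hcos : 0 < cos φ :=
    cos_pos_of_mem_Ioo ⟨by linarith [hφ.1, pi_pos], by linarith [hφ.2, pi_pos]⟩
  have hsin2 : sin (2 * φ) < sin (2 * (θ - φ)) :=
    sin_lt_sin_of_lt_of_le_pi_div_two (by linarith [hφ.1, pi_pos]) (by linarith [hφ.1])
      (by linarith [hφ.2])
  rw [rosenBreakpoint_two_mul_add_two hθ hφ, rosenBreakpoint_of_le le_rfl, breakAngle, sub_add,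
    sinRatio_pi_div_two_sub, sub_sub_cancel_left, cos_neg, div_lt_div_iff₀ hsin hcos]
  rw [sin_two_mul, sin_two_mul] at hsin2
  linarith

theorem monotone_rosenBreakpoint (hθ : IsRosenAngle P θ) (hφ : φ ∈ Ioo 0 (θ / 2)) :
    Monotone (rosenBreakpoint θ φ P) := by
  refine monotone_nat_of_le_succ fun i => ?_
  rcases lt_trichotomy i (2 * P + 2) with hlt | rfl | hgt
  · exact (rosenBreakpoint_lt_succ hθ hφ hlt).le
  · exact (rosenBreakpoint_two_mul_add_two_lt hθ hφ).le
  · rw [rosenBreakpoint_of_le (by omega), rosenBreakpoint_of_le (by omega)]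

theorem isBreakpoints_rosenBreakpoint (hθ : IsRosenAngle P θ) (hφ : φ ∈ Ioo 0 (θ / 2))
    (hα : sinRatio θ (π / 2 - θ + φ) = α * (2 * cos θ)) :
    IsBreakpoints (2 * cos θ) α (2 * P) (rosenBreakpoint θ φ P) where
  monotone := monotone_rosenBreakpoint hθ hφ
  zero := by rw [rosenBreakpoint_of_lt (by omega), breakAngle, hα, sub_one_mul]
  one := by
    rw [rosenBreakpoint_of_lt (by omega), breakAngle, ← hα, sub_add, sinRatio_pi_div_two_sub,
      sinRatio_pi_div_two_sub, one_div_div, sub_sub_cancel_left, cos_neg, ← cos_neg (θ - φ),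
      neg_sub]
  add_two i hi := by
    rw [neg_one_div_rosenBreakpoint hθ hφ (by omega), rosenBreakpoint_of_lt (by omega)]
  neg := rosenBreakpoint_two_mul_add_one_neg hθ hφ
  pos := by
    rw [rosenBreakpoint_two_mul_add_two hθ hφ]
    have hθ4 := hθ.le_pi_div_four
    exact div_pos (sin_pos_of_pos_of_lt_pi hφ.1 (by linarith [hφ.2, pi_pos]))
      (sin_pos_of_pos_of_lt_pi (by linarith [hφ.1, hφ.2]) (by linarith [hφ.1, pi_pos]))
  lt := by
    rw [← hα]
    exact (rosenBreakpoint_two_mul_add_two_lt hθ hφ).trans_eq (rosenBreakpoint_of_le le_rfl)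
  last := by rw [rosenBreakpoint_of_le le_rfl, breakAngle, hα]
  synchronised := rosenBreakpoint_synchronised hθ hφ

end Breakpoint

theorem isRosenPair_two_mul_cos {P : ℕ} {θ α : ℝ} (hθ : IsRosenAngle P θ) (hα : 1 / 2 < α)
    (hαθ : α < 1 / (2 * cos θ)) : IsRosenPair (2 * cos θ) α := by
  have hsqrt : √2 ≤ 2 * cos θ := by
    have hcos := cos_le_cos_of_nonneg_of_le_pi hθ.pos.le (by linarith [pi_pos])
      hθ.le_pi_div_four
    rw [cos_pi_div_four] at hcos
    linarith
  exact ⟨hsqrt, hα, (lt_div_iff₀ ((sqrt_pos.2 two_pos).trans_le hsqrt)).1 hαθ⟩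

/-- Theorem 2.3: for even `q = 2p` and `1/2 < α < 1/λ`, the natural extension map `𝒯_α`
is a bijection of `Ω_α` off of a set of two-dimensional Lebesgue measure zero. -/
theorem stmt5 (p q : ℕ) (hp : 2 ≤ p) (hq : q = 2 * p) (lam α : ℝ)
    (hlam : lam = 2 * Real.cos (Real.pi / q))
    (hα1 : 1 / 2 < α) (hα2 : α < 1 / lam)
    (ℓ r : ℕ → ℝ)
    (hℓ : ∀ n, ℓ n = (Tmap lam α)^[n] ((α - 1) * lam))
    (hr : ∀ n, r n = (Tmap lam α)^[n] (α * lam))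
    (Hodd Heven : ℕ → ℝ)
    (hHodd : ∀ n : ℕ, Hodd n =
      (Real.cos (n * Real.pi / (2 * (p : ℝ))) - Real.cos (((n : ℝ) - 1) * Real.pi / (2 * (p : ℝ))))
        / (Real.cos (((n : ℝ) + 1) * Real.pi / (2 * (p : ℝ)))
          - Real.cos (n * Real.pi / (2 * (p : ℝ)))))
    (hHeven : ∀ n : ℕ, Heven n =
      Real.sin (n * Real.pi / (2 * (p : ℝ))) / Real.sin (((n : ℝ) + 1) * Real.pi / (2 * (p : ℝ))))
    (Ω : Set (ℝ × ℝ))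
    (hΩ : Ω = (⋃ n ∈ Finset.Icc 1 (p - 1), Ico (ℓ (n - 1)) (r n) ×ˢ Icc (0 : ℝ) (Hodd n))
      ∪ (⋃ n ∈ Finset.Icc 1 (p - 1), Ico (r n) (ℓ n) ×ˢ Icc (0 : ℝ) (Heven n))
      ∪ Ico (ℓ (p - 1)) (r 0) ×ˢ Icc (0 : ℝ) (Hodd p)) :
    ∃ N N' : Set (ℝ × ℝ), N ⊆ Ω ∧ N' ⊆ Ω ∧ volume N = 0 ∧ volume N' = 0 ∧
      Set.BijOn (Tnat lam α) (Ω \ N) (Ω \ N') := by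
  obtain ⟨P, rfl⟩ := Nat.exists_eq_add_of_le' hp
  obtain ⟨θ, hθ_def⟩ : ∃ θ, θ = π / (2 * ((P + 2 : ℕ) : ℝ)) := ⟨_, rfl⟩
  simp only [mul_div_assoc, ← hθ_def] at hHodd hHeven
  have hθ : IsRosenAngle P θ := ⟨by
    rw [hθ_def]
    push_cast
    field_simp⟩
  obtain rfl : lam = 2 * cos θ := by rw [hlam, hq, hθ_def, Nat.cast_mul, Nat.cast_ofNat]
  have hpair := isRosenPair_two_mul_cos hθ hα1 hα2
  obtain ⟨φ, hφ, hφα⟩ := exists_sinRatio_eq hθ (c := α * (2 * cos θ))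
    ⟨by nlinarith [hpair.pos], hpair.mul_lt_one⟩
  have hb := isBreakpoints_rosenBreakpoint hθ hφ hφα
  have hodd : ∀ n : ℕ, Hodd (n + 1) = rosenHeight θ (2 * n) := fun n => by
    simp only [hHodd, rosenHeight_two_mul hθ.sin_half_pos.ne', Nat.cast_add_one,
      add_sub_cancel_right, add_assoc, one_add_one_eq_two]
  have heven : ∀ n : ℕ, Heven (n + 1) = rosenHeight θ (2 * n + 1) := fun n => by
    simp only [hHeven, rosenHeight_two_mul_add_one, Nat.cast_add_one, add_assoc,
      one_add_one_eq_two]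
  exact (hb.isHeightFunction_stepFun hpair (isHeights_rosenHeight hθ)).exists_null_bijOn hpair
    (hΩ.trans (hb.closedHypograph_eq hpair.pos rfl hℓ hr hodd heven).symm)
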